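/- For l ∈ ℕ let c_l = 1 + 4 P_l(1/2) + P_l(0), where P_l is the degree-l Legendre polynomial normalized so that P_l(1) = 1. Then c_l = 0 if and only if l = 2. Moreover, there exists a constant C > 0 such that |c_l − 1| ≤ C l^{−1/2} for all l ≥ 1. -/

import Mathlib

/-!
The arithmetic part is 2-adic: clearing denominators in the recurrence shows that
`l! * 2 ^ l * P_l(1/2)` is an odd integer, whereas `l! * P_l(0)` is an integer. Multiplying
`c_l = 0` by `l! * 2 ^ l` therefore forces `2 ^ l ∣ 4`, that is `l ≤ 2`.

For the decay, fix `|t| < 1`. The form `H_n = P_{n+1}² - 2 t P_{n+1} P_n + P_n²` dominates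
`(1 - t²) P_{n+1}²`, and the recurrence makes `n H_n` almost constant: after adding a correction of
the order of `H_n` its relative growth from `n` to `n + 1` is `O(1 / n²)`, so it stays bounded.
-/

open scoped RealInnerProductSpace
open Metric MeasureTheory

noncomputable section

abbrev Euc (n : ℕ) := EuclideanSpace ℝ (Fin n)

/-- The rank-one symmetric map `P_x : y ↦ ⟪y, x⟫ • x`. -/
def projMap {F : Type*} [NormedAddCommGroup F] [InnerProductSpace ℝ F] (x : F) :
    F →ₗ[ℝ] F where
  toFun y := (⟪y, x⟫) • x
  map_add' y z := by simp [inner_add_left, add_smul]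
  map_smul' c y := by simp [real_inner_smul_left, mul_smul]

/-- A configuration is perfect if the maps `P_x`, `x ∈ S`, span the symmetric maps. -/
def IsPerfectCfg {F : Type*} [NormedAddCommGroup F] [InnerProductSpace ℝ F]
    (S : Set F) : Prop :=
  ∀ T : F →ₗ[ℝ] F, T.IsSymmetric → T ∈ Submodule.span ℝ (projMap '' S)

/-- A configuration is eutactic if `Id = Σ_{x∈S} υ_x P_x` with `υ_x > 0`, `υ_x = υ_{-x}`. -/
def IsEutacticCfg {F : Type*} [NormedAddCommGroup F] [InnerProductSpace ℝ F]
    (S : Set F) : Prop :=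
  ∃ υ : F → ℝ, (∀ x ∈ S, 0 < υ x) ∧ (∀ x ∉ S, υ x = 0) ∧
    (Function.support υ).Finite ∧ (∀ x, υ x = υ (-x)) ∧
    ∑ᶠ x, υ x • projMap x = (LinearMap.id : F →ₗ[ℝ] F)

/-- A configuration is semi-eutactic if `Id = Σ_{x∈S} υ_x P_x` with `υ_x ≥ 0`, `υ_x = υ_{-x}`. -/
def IsSemiEutacticCfg {F : Type*} [NormedAddCommGroup F] [InnerProductSpace ℝ F]
    (S : Set F) : Prop :=
  ∃ υ : F → ℝ, (∀ x ∈ S, 0 ≤ υ x) ∧ (∀ x ∉ S, υ x = 0) ∧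
    (Function.support υ).Finite ∧ (∀ x, υ x = υ (-x)) ∧
    ∑ᶠ x, υ x • projMap x = (LinearMap.id : F →ₗ[ℝ] F)

/-- A configuration is extreme if it is perfect and eutactic. -/
def IsExtremeCfg {F : Type*} [NormedAddCommGroup F] [InnerProductSpace ℝ F]
    (S : Set F) : Prop :=
  IsPerfectCfg S ∧ IsEutacticCfg S

/-- Hilbert–Schmidt (Frobenius) norm of a linear map on `ℝ^n`. -/
def frobNorm {n : ℕ} (T : Euc n →ₗ[ℝ] Euc n) : ℝ :=
  Real.sqrt (∑ j, ∑ i, (T (EuclideanSpace.single j 1) i) ^ 2)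

/-- The lattice `T ℤ^n` as a set of points. -/
def latticeSet {n : ℕ} (T : Euc n →ₗ[ℝ] Euc n) : Set (Euc n) :=
  {v | ∃ z : Fin n → ℤ, v = T (∑ i, (z i : ℝ) • EuclideanSpace.single i 1)}

/-- A set is an (n-dimensional) lattice if it is `T ℤ^n` for an invertible `T`. -/
def IsLattice {n : ℕ} (Λ : Set (Euc n)) : Prop :=
  ∃ T : Euc n →ₗ[ℝ] Euc n, LinearMap.det T ≠ 0 ∧ Λ = latticeSet T

/-- The determinant `d(Λ) = |det T|` of a lattice. -/
def latDet {n : ℕ} (Λ : Set (Euc n)) : ℝ :=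
  sInf {d | ∃ T : Euc n →ₗ[ℝ] Euc n, Λ = latticeSet T ∧ d = |LinearMap.det T|}

/-- The metric `δ(Λ, Λ') = inf ‖T - T'‖` on the space of lattices. -/
def latDist {n : ℕ} (Λ Λ' : Set (Euc n)) : ℝ :=
  sInf {d | ∃ T T' : Euc n →ₗ[ℝ] Euc n,
    Λ = latticeSet T ∧ Λ' = latticeSet T' ∧ d = frobNorm (T - T')}

/-- The minimal norm `m(Λ)`. -/
def minNorm {n : ℕ} (Λ : Set (Euc n)) : ℝ :=
  sInf {r | ∃ x ∈ Λ, x ≠ 0 ∧ r = ‖x‖ ^ 2}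

/-- The set `S(Λ)` of minimal vectors of a lattice. -/
def minVecs {n : ℕ} (Λ : Set (Euc n)) : Set (Euc n) :=
  {x | x ∈ Λ ∧ x ≠ 0 ∧ ‖x‖ ^ 2 = minNorm Λ}

/-- An origin-symmetric convex body. -/
structure IsSymCB {n : ℕ} (K : Set (Euc n)) : Prop where
  convex : Convex ℝ K
  compact : IsCompact K
  nonempty_interior : (interior K).Nonempty
  symm : -K = K

/-- A lattice is admissible for a body if it meets the interior only at the origin. -/
def IsAdmissible {n : ℕ} (Λ K : Set (Euc n)) : Prop :=
  Λ ∩ interior K ⊆ {0}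

/-- The critical determinant `d_K`. -/
def critDet {n : ℕ} (K : Set (Euc n)) : ℝ :=
  sInf {d | ∃ Λ : Set (Euc n), IsLattice Λ ∧ IsAdmissible Λ K ∧ d = latDet Λ}

/-- A critical lattice of `K`: an admissible lattice attaining the critical determinant. -/
def IsCriticalLattice {n : ℕ} (Λ K : Set (Euc n)) : Prop :=
  IsLattice Λ ∧ IsAdmissible Λ K ∧ latDet Λ = critDet K

/-- The optimal lattice packing fraction `φ(K) = 2⁻ⁿ vol(K) / d_K`. -/
def packFrac {n : ℕ} (K : Set (Euc n)) : ℝ :=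
  (volume K).toReal / (2 ^ n * critDet K)

/-- The closed unit ball `Bⁿ`. -/
def unitBall (n : ℕ) : Set (Euc n) := Metric.closedBall 0 1

/-- The support function of a body. -/
def suppFn {n : ℕ} (K : Set (Euc n)) (x : Euc n) : ℝ :=
  sSup ((fun y => ⟪x, y⟫) '' K)

/-- The radial function of a body. -/
def radFn {n : ℕ} (K : Set (Euc n)) (x : Euc n) : ℝ :=
  sSup {t : ℝ | 0 ≤ t ∧ t • x ∈ K}

/-- The Legendre polynomials, via the recurrence
`(l+1)P_{l+1}(t) = (2l+1)tP_l(t) - lP_{l-1}(t)`, `P₀ = 1`, `P₁(t) = t`. -/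
def legendreP : ℕ → ℝ → ℝ
  | 0, _ => 1
  | 1, t => t
  | l + 2, t =>
      ((2 * (l : ℝ) + 3) * t * legendreP (l + 1) t - ((l : ℝ) + 1) * legendreP l t) /
        ((l : ℝ) + 2)

section Arithmetic

open scoped Nat

/-- The integers `l! * b ^ l * P_l(a / b)`, defined by the Legendre recurrence cleared of
denominators so that their integrality is built in. -/
def scaledLegendre (a b : ℤ) : ℕ → ℤ
  | 0 => 1
  | 1 => a
  | l + 2 =>
      (2 * l + 3) * a * scaledLegendre a b (l + 1) - ((l + 1) * b) ^ 2 * scaledLegendre a b l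

variable {a b : ℤ}

theorem cast_scaledLegendre (hb : b ≠ 0) (l : ℕ) :
    (scaledLegendre a b l : ℝ) = l ! * b ^ l * legendreP l (a / b) := by
  have hb' : (b : ℝ) ≠ 0 := mod_cast hb
  induction l using Nat.twoStepInduction with
  | zero => simp [scaledLegendre, legendreP]
  | one => simp [scaledLegendre, legendreP, mul_div_cancel₀ _ hb']
  | more l ih ih' =>
    simp only [scaledLegendre, legendreP, Nat.factorial_succ] at ih ih' ⊢
    push_cast at ih ih' ⊢
    rw [ih, ih']
    field_simp
    ring

theorem odd_scaledLegendre (ha : Odd a) (hb : Even b) (l : ℕ) : Odd (scaledLegendre a b l) := by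
  induction l using Nat.twoStepInduction with
  | zero => exact odd_one
  | one => exact ha
  | more l _ ih =>
    have hodd : Odd (2 * (l : ℤ) + 3) := ⟨l + 1, by ring⟩
    exact ((hodd.mul ha).mul ih).sub_even (((hb.mul_left _).pow_of_ne_zero two_ne_zero).mul_right _)

theorem le_of_factorial_mul_two_pow_mul_legendreP_eq_intCast (ha : Odd a) {k l : ℕ} {n : ℤ}
    (h : l ! * (2 ^ k * legendreP l (a / 2)) = n) : l ≤ k := by
  have hscaled : 2 ^ l * n = 2 ^ k * scaledLegendre a 2 l := by
    have hcast := cast_scaledLegendre (a := a) two_ne_zero l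
    push_cast at hcast
    rify
    rw [hcast, ← h]
    ring
  have hcoprime : IsCoprime (2 ^ l : ℤ) (scaledLegendre a 2 l) :=
    (Int.isCoprime_two_left.mpr (odd_scaledLegendre ha even_two l)).pow_left
  have hdvd : (2 : ℤ) ^ l ∣ 2 ^ k := hcoprime.dvd_of_dvd_mul_right ⟨n, hscaled.symm⟩
  exact (Nat.pow_dvd_pow_iff_le_right one_lt_two).mp (mod_cast hdvd)

theorem legendre_coefficient_eq_zero_iff (l : ℕ) :
    1 + 4 * legendreP l (1 / 2) + legendreP l 0 = 0 ↔ l = 2 := by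
  refine ⟨fun h => ?_, by rintro rfl; norm_num [legendreP]⟩
  have hzero := cast_scaledLegendre (a := 0) one_ne_zero l
  have hle : l ≤ 2 := by
    refine le_of_factorial_mul_two_pow_mul_legendreP_eq_intCast (a := 1) odd_one
      (n := -(l ! + scaledLegendre 0 1 l)) ?_
    push_cast at hzero ⊢
    rw [hzero]
    norm_num
    linear_combination (l ! : ℝ) * h
  interval_cases l <;> norm_num [legendreP] at h
  rfl

end Arithmetic

theorem le_mul_exp_of_succ_le_one_add_div_mul {u : ℕ → ℝ} {K : ℝ} (hK : 0 ≤ K)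
    (hu : ∀ n, 0 ≤ u n) (hsucc : ∀ n : ℕ, u (n + 1) ≤ (1 + K / ((n + 1) * (n + 2))) * u n)
    (n : ℕ) : u n ≤ u 0 * Real.exp K := by
  have hfactor (m : ℕ) :
      1 + K / ((m + 1) * (m + 2)) ≤ Real.exp (K / (m + 1) - K / (m + 2)) := by
    have hsub : K / (m + 1) - K / (m + 2) = K / ((m + 1) * (m + 2) : ℝ) := by
      field_simp
      ring
    rw [hsub, add_comm]
    exact Real.add_one_le_exp _
  have hanti : Antitone fun m : ℕ => u m * Real.exp (K / (m + 1)) := by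
    refine antitone_nat_of_succ_le fun m => ?_
    calc u (m + 1) * Real.exp (K / ((m + 1 : ℕ) + 1))
        ≤ Real.exp (K / (m + 1) - K / (m + 2)) * u m * Real.exp (K / (m + 2)) := by
          rw [Nat.cast_succ, add_assoc (m : ℝ) 1 1, one_add_one_eq_two]
          gcongr
          exact (hsucc m).trans (mul_le_mul_of_nonneg_right (hfactor m) (hu m))
      _ = u m * Real.exp (K / (m + 1)) := by
          rw [mul_right_comm, ← Real.exp_add, sub_add_cancel, mul_comm]
  calc u n ≤ u n * Real.exp (K / (n + 1)) :=
        le_mul_of_one_le_right (hu n) (Real.one_le_exp (by positivity))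
    _ ≤ u 0 * Real.exp K := by simpa using hanti n.zero_le

section Decay

/-- The energy of the Legendre recurrence: a quadratic form in `(P_n, P_{n+1})`, positive definite
for `|t| < 1` and invariant under the limiting recurrence `P_{n+2} = 2 t P_{n+1} - P_n`. -/
def legendreEnergy (n : ℕ) (t : ℝ) : ℝ :=
  legendreP (n + 1) t ^ 2 - 2 * t * legendreP (n + 1) t * legendreP n t + legendreP n t ^ 2

/-- The almost conserved quantity of the Legendre recurrence. The difference of squares cancels the
leading part of the increments of `(n + 1) * legendreEnergy n t`, and the extra multiple of the
energy makes the sum an upper bound of `(n + 1) * legendreEnergy n t` for every `n`. -/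
def correctedLegendreEnergy (n : ℕ) (t : ℝ) : ℝ :=
  (n + 1 + 1 / (2 * (1 - t ^ 2))) * legendreEnergy n t
    + (legendreP (n + 1) t ^ 2 - legendreP n t ^ 2) / 2

variable (n : ℕ) {t : ℝ}

-- Analytically, `d = (1 - t²) P'_{n+1}(t) / ((n + 1) (n + 2))`.
theorem exists_legendreP_eq_add_and_eq_sub (t : ℝ) :
    ∃ d, legendreP n t = t * legendreP (n + 1) t + (n + 2) * d ∧
      legendreP (n + 2) t = t * legendreP (n + 1) t - (n + 1) * d := by
  refine ⟨(legendreP n t - t * legendreP (n + 1) t) / (n + 2), ?_, ?_⟩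
  · field_simp
    ring
  · rw [legendreP]
    field_simp
    ring

theorem mul_sq_legendreP_succ_le_legendreEnergy (t : ℝ) :
    (1 - t ^ 2) * legendreP (n + 1) t ^ 2 ≤ legendreEnergy n t := by
  unfold legendreEnergy
  linarith [sq_nonneg (t * legendreP (n + 1) t - legendreP n t)]

theorem mul_sq_legendreP_le_legendreEnergy (t : ℝ) :
    (1 - t ^ 2) * legendreP n t ^ 2 ≤ legendreEnergy n t := by
  unfold legendreEnergy
  linarith [sq_nonneg (legendreP (n + 1) t - t * legendreP n t)]

theorem legendreEnergy_succ_le (t : ℝ) : legendreEnergy (n + 1) t ≤ legendreEnergy n t := by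
  obtain ⟨d, hprev, hnext⟩ := exists_legendreP_eq_add_and_eq_sub n t
  have hdiff : legendreEnergy n t - legendreEnergy (n + 1) t = (2 * n + 3) * d ^ 2 := by
    simp only [legendreEnergy, hprev, hnext]
    ring
  have : 0 ≤ (2 * n + 3) * d ^ 2 := by positivity
  linarith

theorem mul_legendreEnergy_le_correctedLegendreEnergy (ht : t ^ 2 < 1) :
    (n + 1) * legendreEnergy n t ≤ correctedLegendreEnergy n t := by
  have : 0 < 1 - t ^ 2 := sub_pos.mpr ht
  have hP : legendreP n t ^ 2 / 2 ≤ 1 / (2 * (1 - t ^ 2)) * legendreEnergy n t := by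
    rw [one_div_mul_eq_div, div_le_div_iff₀ two_pos (by positivity)]
    linarith [mul_sq_legendreP_le_legendreEnergy n t]
  unfold correctedLegendreEnergy
  linarith [sq_nonneg (legendreP (n + 1) t)]

theorem correctedLegendreEnergy_nonneg (ht : t ^ 2 < 1) : 0 ≤ correctedLegendreEnergy n t := by
  have : 0 < 1 - t ^ 2 := sub_pos.mpr ht
  have henergy : 0 ≤ legendreEnergy n t :=
    le_trans (by positivity) (mul_sq_legendreP_le_legendreEnergy n t)
  exact le_trans (by positivity) (mul_legendreEnergy_le_correctedLegendreEnergy n ht)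

theorem mul_add_half_sq_le_div (ht : t ^ 2 < 1) {a : ℝ} (ha : 1 ≤ a) (p d : ℝ) :
    t * p * d + d ^ 2 / 2 ≤ ((1 - t ^ 2) * p ^ 2 + (a * d) ^ 2) / ((1 - t ^ 2) * a) := by
  have hs : 0 < 1 - t ^ 2 := sub_pos.mpr ht
  have hs1 : 1 - t ^ 2 ≤ 1 := sub_le_self 1 (sq_nonneg t)
  have hcross : t * p * d * ((1 - t ^ 2) * a) ≤ ((1 - t ^ 2) * p ^ 2 + (a * d) ^ 2) / 2 := by
    have hcoeff : (1 - t ^ 2) * t ^ 2 ≤ 1 := mul_le_one₀ hs1 (sq_nonneg t) ht.le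
    linarith [mul_le_mul_of_nonneg_right hcoeff (sq_nonneg (a * d)),
      mul_nonneg hs.le (sq_nonneg (p - t * (a * d)))]
  have hself : d ^ 2 / 2 * ((1 - t ^ 2) * a) ≤ (a * d) ^ 2 / 2 := by
    have hcoeff : (1 - t ^ 2) * a ≤ a * a := by gcongr; exact hs1.trans ha
    linarith [mul_le_mul_of_nonneg_left hcoeff (sq_nonneg d)]
  rw [le_div_iff₀ (by positivity)]
  linarith [mul_nonneg hs.le (sq_nonneg p)]

theorem correctedLegendreEnergy_succ_le_add (ht : t ^ 2 < 1) :
    correctedLegendreEnergy (n + 1) t ≤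
      correctedLegendreEnergy n t + legendreEnergy n t / ((1 - t ^ 2) * (n + 2)) := by
  have : 0 < 1 - t ^ 2 := sub_pos.mpr ht
  obtain ⟨d, hprev, hnext⟩ := exists_legendreP_eq_add_and_eq_sub n t
  set p := legendreP (n + 1) t with hp
  have hdiff : correctedLegendreEnergy (n + 1) t - correctedLegendreEnergy n t =
      1 / (2 * (1 - t ^ 2)) * (legendreEnergy (n + 1) t - legendreEnergy n t)
        + (t * p * d + d ^ 2 / 2) := by
    simp only [correctedLegendreEnergy, legendreEnergy, hprev, hnext, ← hp]
    push_cast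
    ring
  have henergy : legendreEnergy n t = (1 - t ^ 2) * p ^ 2 + ((n + 2) * d) ^ 2 := by
    simp only [legendreEnergy, hprev, ← hp]
    ring
  have hdecrease : 1 / (2 * (1 - t ^ 2)) * (legendreEnergy (n + 1) t - legendreEnergy n t) ≤ 0 :=
    mul_nonpos_of_nonneg_of_nonpos (by positivity) (sub_nonpos.mpr (legendreEnergy_succ_le n t))
  have hincrease : t * p * d + d ^ 2 / 2 ≤ legendreEnergy n t / ((1 - t ^ 2) * (n + 2)) :=
    henergy ▸ mul_add_half_sq_le_div ht (by linarith [n.cast_nonneg (α := ℝ)]) p d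
  linarith

theorem correctedLegendreEnergy_succ_le_mul (ht : t ^ 2 < 1) :
    correctedLegendreEnergy (n + 1) t ≤
      (1 + 1 / (1 - t ^ 2) / ((n + 1) * (n + 2))) * correctedLegendreEnergy n t := by
  have : 0 < 1 - t ^ 2 := sub_pos.mpr ht
  have hmul := mul_legendreEnergy_le_correctedLegendreEnergy n ht
  calc correctedLegendreEnergy (n + 1) t
      ≤ correctedLegendreEnergy n t + legendreEnergy n t / ((1 - t ^ 2) * (n + 2)) :=
        correctedLegendreEnergy_succ_le_add n ht
    _ = correctedLegendreEnergy n t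
          + 1 / (1 - t ^ 2) / ((n + 1) * (n + 2)) * ((n + 1) * legendreEnergy n t) := by
        field_simp
    _ ≤ correctedLegendreEnergy n t
          + 1 / (1 - t ^ 2) / ((n + 1) * (n + 2)) * correctedLegendreEnergy n t := by gcongr
    _ = _ := by ring

theorem correctedLegendreEnergy_zero (ht : t ^ 2 ≠ 1) :
    correctedLegendreEnergy 0 t = 1 - t ^ 2 / 2 := by
  have : 1 - t ^ 2 ≠ 0 := sub_ne_zero.mpr ht.symm
  simp only [correctedLegendreEnergy, legendreEnergy, legendreP]
  field_simp
  push_cast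
  ring

theorem correctedLegendreEnergy_le_exp (ht : t ^ 2 < 1) :
    correctedLegendreEnergy n t ≤ Real.exp (1 / (1 - t ^ 2)) := by
  have : 0 < 1 - t ^ 2 := sub_pos.mpr ht
  calc correctedLegendreEnergy n t
      ≤ correctedLegendreEnergy 0 t * Real.exp (1 / (1 - t ^ 2)) :=
        le_mul_exp_of_succ_le_one_add_div_mul (u := fun m => correctedLegendreEnergy m t)
          (by positivity) (fun m => correctedLegendreEnergy_nonneg m ht)
          (fun m => correctedLegendreEnergy_succ_le_mul m ht) n
    _ ≤ Real.exp (1 / (1 - t ^ 2)) := by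
        refine mul_le_of_le_one_left (Real.exp_pos _).le ?_
        rw [correctedLegendreEnergy_zero ht.ne]
        linarith [sq_nonneg t]

theorem natCast_mul_sq_legendreP_le (ht : t ^ 2 < 1) :
    n * legendreP n t ^ 2 ≤ Real.exp (1 / (1 - t ^ 2)) / (1 - t ^ 2) := by
  have hs : 0 < 1 - t ^ 2 := sub_pos.mpr ht
  rcases n with _ | n
  · simp only [Nat.cast_zero, zero_mul]
    positivity
  · rw [le_div_iff₀ hs]
    calc ((n + 1 : ℕ) : ℝ) * legendreP (n + 1) t ^ 2 * (1 - t ^ 2)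
        = (n + 1) * ((1 - t ^ 2) * legendreP (n + 1) t ^ 2) := by push_cast; ring
      _ ≤ (n + 1) * legendreEnergy n t := by
          gcongr
          exact mul_sq_legendreP_succ_le_legendreEnergy n t
      _ ≤ correctedLegendreEnergy n t := mul_legendreEnergy_le_correctedLegendreEnergy n ht
      _ ≤ Real.exp (1 / (1 - t ^ 2)) := correctedLegendreEnergy_le_exp n ht

theorem exists_abs_legendreP_le_rpow (ht : t ^ 2 < 1) :
    ∃ C > (0 : ℝ), ∀ l : ℕ, 1 ≤ l → |legendreP l t| ≤ C * (l : ℝ) ^ (-(1 / 2) : ℝ) := by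
  have : 0 < 1 - t ^ 2 := sub_pos.mpr ht
  refine ⟨√(Real.exp (1 / (1 - t ^ 2)) / (1 - t ^ 2)), by positivity, fun l hl => ?_⟩
  have hl' : (0 : ℝ) < l := mod_cast hl
  rw [Real.rpow_neg hl'.le, ← Real.sqrt_eq_rpow, ← div_eq_mul_inv, ← Real.sqrt_div' _ hl'.le]
  refine Real.abs_le_sqrt ?_
  rw [le_div_iff₀' hl']
  exact natCast_mul_sq_legendreP_le l ht

end Decay

/-- Lemma 4.2: with `c_l = 1 + 4P_l(1/2) + P_l(0)`, one has `c_l = 0`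
iff `l = 2`, and `|c_l - 1| ≤ C l^{-1/2}` for all `l ≥ 1`. -/
theorem legendre_coefficient_lemma :
    (∀ l : ℕ, 1 + 4 * legendreP l (1 / 2) + legendreP l 0 = 0 ↔ l = 2) ∧
    ∃ C > (0 : ℝ), ∀ l : ℕ, 1 ≤ l →
      |1 + 4 * legendreP l (1 / 2) + legendreP l 0 - 1| ≤ C * (l : ℝ) ^ (-(1 / 2) : ℝ) := by
  obtain ⟨A, hA, hhalf⟩ := exists_abs_legendreP_le_rpow (t := 1 / 2) (by norm_num)
  obtain ⟨B, hB, hzero⟩ := exists_abs_legendreP_le_rpow (t := 0) (by norm_num)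
  refine ⟨legendre_coefficient_eq_zero_iff, 4 * A + B, by positivity, fun l hl => ?_⟩
  calc |1 + 4 * legendreP l (1 / 2) + legendreP l 0 - 1|
      = |4 * legendreP l (1 / 2) + legendreP l 0| := by congr 1; ring
    _ ≤ 4 * |legendreP l (1 / 2)| + |legendreP l 0| := by
        simpa [abs_mul] using abs_add_le (4 * legendreP l (1 / 2)) (legendreP l 0)
    _ ≤ 4 * (A * (l : ℝ) ^ (-(1 / 2) : ℝ)) + B * (l : ℝ) ^ (-(1 / 2) : ℝ) := by
        gcongr
        exacts [hhalf l hl, hzero l hl]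
    _ = (4 * A + B) * (l : ℝ) ^ (-(1 / 2) : ℝ) := by ring

end
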